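/- Let Γ = (V,E) be a simple finite connected graph, q : V → ℝ a potential, and H(Γ) = Q − C the discrete Schrödinger operator, where Q = diag(q) and C is the adjacency matrix of Γ. Let β = |E| − |V| + 1, fix a spanning tree of Γ, and let S = {e_1, …, e_β} be the edges not in the tree, with e_j = (u_j, v_j), u_j < v_j. For α = (α_1,…,α_β) ∈ ℝ^β let H(Γ^α_mag) be the Hermitian matrix with diagonal entries q_u, entries −1 at positions (u,v),(v,u) for edges (u,v) ∈ E∖S, entries −e^{iα_j} at (u_j,v_j) and −e^{−iα_j} at (v_j,u_j) for e_j ∈ S, and 0 elsewhere. Suppose λ_n(H(Γ)) (the n-th smallest eigenvalue) is simple and its eigenvector f is nonzero at every vertex; let φ be the number of edges (u,v) ∈ E with f_u f_v < 0. Then the function α ↦ λ_n(H(Γ^α_mag)) has a local minimum at α = 0 if and only if φ = n − 1. -/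

import Mathlib

open Matrix

/-- The eigenvalues of a Hermitian matrix, sorted in increasing order and counted with
multiplicity (junk value `0` if the matrix is not Hermitian); `sE M i` is the `i`-th sorted
eigenvalue, 0-based, with junk value `0` out of range. -/
noncomputable def sortedEigs {𝕜 : Type*} [RCLike 𝕜] {d : ℕ} (M : Matrix (Fin d) (Fin d) 𝕜) :
    Fin d → ℝ :=
  if h : M.IsHermitian then h.eigenvalues ∘ Tuple.sort h.eigenvalues else 0

noncomputable def sE {𝕜 : Type*} [RCLike 𝕜] {d : ℕ} (M : Matrix (Fin d) (Fin d) 𝕜)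
    (i : ℕ) : ℝ :=
  if h : i < d then sortedEigs M ⟨i, h⟩ else 0

/-- The discrete Schrödinger operator `H(Γ) = Q - C` of a graph `G` with potential `q`. -/
noncomputable def schrodOp {N : ℕ} (G : SimpleGraph (Fin N)) [DecidableRel G.Adj]
    (q : Fin N → ℝ) : Matrix (Fin N) (Fin N) ℝ :=
  Matrix.diagonal q - G.adjMatrix ℝ

/-- The cut operator `H(Γ^cut_γ)`: for each `j`, the matrix entries at `(uE j, vE j)` and
`(vE j, uE j)` (equal to `-1` in `H(Γ)`) are replaced by `0` and the diagonal entries at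
`uE j`, `vE j` are decreased by `γ j` and `(γ j)⁻¹` respectively. -/
noncomputable def schrodCut {N β : ℕ} (G : SimpleGraph (Fin N)) [DecidableRel G.Adj]
    (q : Fin N → ℝ) (uE vE : Fin β → Fin N) (γ : Fin β → ℝ) :
    Matrix (Fin N) (Fin N) ℝ :=
  schrodOp G q - ∑ j : Fin β, Matrix.of (fun a b =>
    if a = uE j ∧ b = uE j then γ j
    else if a = vE j ∧ b = vE j then (γ j)⁻¹
    else if (a = uE j ∧ b = vE j) ∨ (a = vE j ∧ b = uE j) then -1
    else 0)

/-- The magnetic operator `H(Γ^α_mag)`: the entries of `H(Γ)` at `(uE j, vE j)` and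
`(vE j, uE j)` (equal to `-1`) are replaced by `-exp(i α j)` and `-exp(-i α j)`. -/
noncomputable def schrodMag {N β : ℕ} (G : SimpleGraph (Fin N)) [DecidableRel G.Adj]
    (q : Fin N → ℝ) (uE vE : Fin β → Fin N) (α : Fin β → ℝ) :
    Matrix (Fin N) (Fin N) ℂ :=
  (schrodOp G q).map (fun x => (x : ℂ)) + ∑ j : Fin β, Matrix.of (fun a b =>
    if a = uE j ∧ b = vE j then 1 - Complex.exp (Complex.I * (α j : ℝ))
    else if a = vE j ∧ b = uE j then 1 - Complex.exp (-(Complex.I * (α j : ℝ)))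
    else 0)

/-- The number of sign changes ("zeros") of a vertex function `f`: the number of edges of `G`
at whose endpoints `f` has different signs. -/
noncomputable def signChanges {N : ℕ} (G : SimpleGraph (Fin N)) (f : Fin N → ℝ) : ℕ :=
  {e : Sym2 (Fin N) | e ∈ G.edgeSet ∧ ∀ u v : Fin N, e = s(u, v) → f u * f v < 0}.ncard

/-- Sorted orthonormal eigenbasis of a Hermitian matrix. -/
theorem exists_sorted_basis {𝕜 : Type*} [RCLike 𝕜] {d : ℕ} (M : Matrix (Fin d) (Fin d) 𝕜)
    (hM : M.IsHermitian) :
    ∃ b : OrthonormalBasis (Fin d) 𝕜 (EuclideanSpace 𝕜 (Fin d)),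
      (∀ k : Fin d, M *ᵥ (b k).ofLp = ((sE M k : ℝ) : 𝕜) • (b k).ofLp) ∧
      (∀ k l : Fin d, k ≤ l → sE M k ≤ sE M l) := by
  refine ⟨hM.eigenvectorBasis.reindex (Tuple.sort hM.eigenvalues).symm, ?_, ?_⟩
  · intro k
    have h := hM.mulVec_eigenvectorBasis (Tuple.sort hM.eigenvalues k)
    simp only [OrthonormalBasis.reindex_apply, Equiv.symm_symm]
    rw [h]
    simp only [sE, sortedEigs, hM, k.2, dif_pos, Fin.eta, Function.comp]
    ext i
    simp [RCLike.real_smul_eq_coe_mul]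
  · intro k l hkl
    have := Tuple.monotone_sort hM.eigenvalues hkl
    simpa only [sE, sortedEigs, hM, k.2, l.2, dif_pos, Fin.eta] using this

/-- The (real part of the) quadratic form of a matrix. -/
noncomputable def qform {𝕜 : Type*} [RCLike 𝕜] {d : ℕ} (M : Matrix (Fin d) (Fin d) 𝕜)
    (x : Fin d → 𝕜) : ℝ := RCLike.re (star x ⬝ᵥ (M *ᵥ x))

theorem qform_expand {𝕜 : Type*} [RCLike 𝕜] {d : ℕ} (M : Matrix (Fin d) (Fin d) 𝕜)
    (μ : Fin d → ℝ)
    (b : OrthonormalBasis (Fin d) 𝕜 (EuclideanSpace 𝕜 (Fin d)))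
    (hb : ∀ k : Fin d, M *ᵥ (b k).ofLp = ((μ k : ℝ) : 𝕜) • (b k).ofLp)
    (x : Fin d → 𝕜) :
    qform M x = ∑ k, μ k * ‖inner 𝕜 (b k) (WithLp.toLp 2 x)‖ ^ 2 ∧
    ∑ u, ‖x u‖ ^ 2 = ∑ k, ‖inner 𝕜 (b k) (WithLp.toLp 2 x)‖ ^ 2 := by
  constructor
  · set X : EuclideanSpace 𝕜 (Fin d) := WithLp.toLp 2 x with hX
    have hx : x = ∑ k, (inner 𝕜 (b k) X) • (b k).ofLp := by
      have h := congrArg WithLp.ofLp (b.sum_repr' X)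
      rw [← show X.ofLp = x from rfl, ← h]
      simp
    have h1 : M *ᵥ x = ∑ k, (inner 𝕜 (b k) X * ((μ k : ℝ) : 𝕜)) • (b k).ofLp := by
      conv_lhs => rw [hx]
      rw [Matrix.mulVec_sum]
      refine Finset.sum_congr rfl fun k _ => ?_
      rw [Matrix.mulVec_smul, hb, smul_smul]
    have h2 : ∀ k, star x ⬝ᵥ (b k).ofLp = star (inner 𝕜 (b k) X) := by
      intro k
      rw [EuclideanSpace.inner_eq_star_dotProduct, star_dotProduct]
      rw [hX]
      simp [dotProduct_comm]
    unfold qform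
    rw [h1, dotProduct_sum, map_sum]
    refine Finset.sum_congr rfl fun k _ => ?_
    rw [dotProduct_smul, h2, smul_eq_mul]
    have : inner 𝕜 (b k) X * ((μ k : ℝ) : 𝕜) * star (inner 𝕜 (b k) X)
      = ((μ k * ‖inner 𝕜 (b k) X‖ ^ 2 : ℝ) : 𝕜) := by
      rw [mul_right_comm, RCLike.star_def, RCLike.mul_conj]
      push_cast
      ring
    rw [this, RCLike.ofReal_re]
  · rw [b.sum_sq_norm_inner_right, EuclideanSpace.norm_sq_eq]

/-- Strict Courant–Fischer upper bound. -/
theorem sE_lt_of_test {𝕜 : Type*} [RCLike 𝕜] {d : ℕ} (M : Matrix (Fin d) (Fin d) 𝕜)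
    (hM : M.IsHermitian) {ι : Type*} [Fintype ι] (m : ℕ) (hm : m < d)
    (hι : m < Fintype.card ι) (T : (ι → 𝕜) →ₗ[𝕜] (Fin d → 𝕜)) (μ : ℝ)
    (hT : ∀ c, c ≠ 0 → qform M (T c) < μ * ∑ u, ‖T c u‖ ^ 2) : sE M m < μ := by
  obtain ⟨b, hb, hmono⟩ := exists_sorted_basis M hM
  by_contra hcon
  push Not at hcon
  let L : (ι → 𝕜) →ₗ[𝕜] (Fin m → 𝕜) :=
    LinearMap.pi fun k : Fin m =>
      ((innerSL 𝕜 (b ⟨k, k.2.trans hm⟩)).toLinearMap ∘ₗ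
        (WithLp.linearEquiv 2 𝕜 (Fin d → 𝕜)).symm.toLinearMap) ∘ₗ T
  have hker : LinearMap.ker L ≠ ⊥ := L.ker_ne_bot_of_finrank_lt (by simpa using hι)
  obtain ⟨c, hc, hc0⟩ := (Submodule.ne_bot_iff _).1 hker
  have hz : ∀ k : Fin m, inner 𝕜 (b ⟨k, k.2.trans hm⟩) (WithLp.toLp 2 (T c)) = 0 := by
    intro k
    exact congrFun (LinearMap.mem_ker.1 hc) k
  have h := hT c hc0
  obtain ⟨e1, e2⟩ := qform_expand M _ b hb (T c)
  rw [e1, e2, Finset.mul_sum] at h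
  refine absurd h (not_lt.2 (Finset.sum_le_sum fun k _ => ?_))
  by_cases hk : (k : ℕ) < m
  · have := hz ⟨k, hk⟩
    simp only [Fin.eta] at this
    simp [this]
  · refine mul_le_mul_of_nonneg_right (hcon.trans ?_) (sq_nonneg _)
    exact hmono ⟨m, hm⟩ k (by rw [Fin.le_def]; simpa using hk)

/-- Courant–Fischer lower bound. -/
theorem le_sE_of_constraint {𝕜 : Type*} [RCLike 𝕜] {d : ℕ} (M : Matrix (Fin d) (Fin d) 𝕜)
    (hM : M.IsHermitian) {ι : Type*} [Fintype ι] (m : ℕ) (hm : m < d)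
    (hι : Fintype.card ι ≤ m) (T : (Fin d → 𝕜) →ₗ[𝕜] (ι → 𝕜)) (μ : ℝ)
    (hT : ∀ x, T x = 0 → μ * ∑ u, ‖x u‖ ^ 2 ≤ qform M x) : μ ≤ sE M m := by
  obtain ⟨b, hb, hmono⟩ := exists_sorted_basis M hM
  by_contra hcon
  push Not at hcon
  let L2 : (Fin d → 𝕜) →ₗ[𝕜] (Fin (d - (m + 1)) → 𝕜) :=
    LinearMap.pi fun k : Fin (d - (m + 1)) =>
      ((innerSL 𝕜 (b ⟨k + (m + 1), by omega⟩)).toLinearMap ∘ₗ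
        (WithLp.linearEquiv 2 𝕜 (Fin d → 𝕜)).symm.toLinearMap)
  have hker : LinearMap.ker (T.prod L2) ≠ ⊥ :=
    LinearMap.ker_ne_bot_of_finrank_lt (by simp; omega)
  obtain ⟨x, hx, hx0⟩ := (Submodule.ne_bot_iff _).1 hker
  rw [LinearMap.mem_ker, LinearMap.prod_apply] at hx
  replace hx := Prod.mk_eq_zero.1 hx
  have hz : ∀ k : Fin d, m < k → inner 𝕜 (b k) (WithLp.toLp 2 x) = 0 := by
    intro k hk
    have h1 := congrFun hx.2 ⟨k - (m + 1), by omega⟩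
    have h2 : (⟨(k : ℕ) - (m + 1) + (m + 1), by omega⟩ : Fin d) = k := by
      ext; simp; omega
    have h3 : inner 𝕜 (b ⟨(k : ℕ) - (m + 1) + (m + 1), by omega⟩) (WithLp.toLp 2 x) = 0 := h1
    rwa [h2] at h3
  have h := hT x hx.1
  obtain ⟨e1, e2⟩ := qform_expand M _ b hb x
  have hpos : 0 < ∑ u, ‖x u‖ ^ 2 := by
    obtain ⟨u, hu⟩ := Function.ne_iff.1 hx0
    refine Finset.sum_pos' (fun _ _ => sq_nonneg _) ⟨u, Finset.mem_univ _, ?_⟩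
    have : 0 < ‖x u‖ := norm_pos_iff.2 hu
    positivity
  have h4 : qform M x ≤ sE M m * ∑ u, ‖x u‖ ^ 2 := by
    rw [e1, e2, Finset.mul_sum]
    refine Finset.sum_le_sum fun k _ => ?_
    by_cases hk : m < (k : ℕ)
    · simp [hz k hk]
    · refine mul_le_mul_of_nonneg_right ?_ (sq_nonneg _)
      exact hmono k ⟨m, hm⟩ (by rw [Fin.le_def]; simpa using hk)
  nlinarith

/-- The sorted eigenvalues do not change under complexification. -/
theorem sE_map {d : ℕ} (M : Matrix (Fin d) (Fin d) ℝ) (hM : M.IsHermitian)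
    (hM' : (M.map (fun x => (x : ℂ))).IsHermitian) (m : ℕ) :
    sE (M.map (fun x => (x : ℂ))) m = sE M m := by
  have h1 : (Finset.univ.val.map hM'.eigenvalues) = Finset.univ.val.map hM.eigenvalues := by
    have e1 := hM'.roots_charpoly_eq_eigenvalues
    have e2 := hM.charpoly_eq
    have e3 : (M.map (fun x => (x : ℂ))).charpoly = M.charpoly.map Complex.ofRealHom :=
      Matrix.charpoly_map M Complex.ofRealHom
    rw [e3, e2, Polynomial.map_prod] at e1
    simp only [Polynomial.map_sub, Polynomial.map_X, Polynomial.map_C] at e1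
    rw [Polynomial.roots_prod _ _ (by
      simp [Finset.prod_ne_zero_iff, Polynomial.X_sub_C_ne_zero])] at e1
    simp only [Polynomial.roots_X_sub_C, Multiset.bind_singleton] at e1
    have e4 := congrArg (Multiset.map Complex.re) e1
    simp only [Multiset.map_map, Function.comp_def] at e4
    simpa using e4.symm
  have h2 : (hM'.eigenvalues ∘ Tuple.sort hM'.eigenvalues)
      = hM.eigenvalues ∘ Tuple.sort hM.eigenvalues := by
    rw [Fin.univ_val_map, Fin.univ_val_map, Multiset.coe_eq_coe] at h1
    have p1 := (Equiv.Perm.ofFn_comp_perm (Tuple.sort hM'.eigenvalues) hM'.eigenvalues)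
    have p2 := (Equiv.Perm.ofFn_comp_perm (Tuple.sort hM.eigenvalues) hM.eigenvalues)
    have p3 := (p1.trans h1).trans p2.symm
    exact List.ofFn_injective (p3.eq_of_sortedLE
      (Tuple.monotone_sort hM'.eigenvalues).sortedLE_ofFn
      (Tuple.monotone_sort hM.eigenvalues).sortedLE_ofFn)
  unfold sE sortedEigs
  rw [dif_pos hM, dif_pos hM', h2]

/-- Strict monotonicity below a simple eigenvalue. -/
theorem sE_lt_of_simple {d : ℕ} (M : Matrix (Fin d) (Fin d) ℝ) (m k : ℕ) (hm : m < d) (hk : k < m)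
    (b : OrthonormalBasis (Fin d) ℝ (EuclideanSpace ℝ (Fin d)))
    (hb : ∀ k : Fin d, M *ᵥ (b k).ofLp = sE M k • (b k).ofLp)
    (hmono : ∀ k l : Fin d, k ≤ l → sE M k ≤ sE M l)
    (hsimple : Module.finrank ℝ
      (Module.End.eigenspace (Matrix.toLin' M) (sE M m)) = 1) : sE M k < sE M m := by
  refine lt_of_le_of_ne (hmono ⟨k, hk.trans hm⟩ ⟨m, hm⟩ hk.le) fun heq => ?_
  have h1 : ∀ j : Fin d, sE M j = sE M m → (b j).ofLp ∈ Module.End.eigenspace (Matrix.toLin' M) (sE M m) := by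
    intro j hj
    rw [Module.End.mem_eigenspace_iff, Matrix.toLin'_apply, hb, hj]
  have hne : ∀ j : Fin d, (b j).ofLp ≠ 0 := by
    intro j hj
    exact b.toBasis.ne_zero j (by simpa using hj)
  obtain ⟨c, hc⟩ := (finrank_eq_one_iff_of_nonzero'
    (⟨_, h1 ⟨m, hm⟩ rfl⟩ : Module.End.eigenspace (Matrix.toLin' M) (sE M m))
    (fun h => hne ⟨m, hm⟩ (congrArg Subtype.val h))).1 hsimple ⟨_, h1 ⟨k, hk.trans hm⟩ heq⟩
  have hc' : c • b ⟨m, hm⟩ = b ⟨k, hk.trans hm⟩ := by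
    have := congrArg Subtype.val hc
    ext i
    exact congrFun this i
  have h2 := b.orthonormal.2 (show (⟨m, hm⟩ : Fin d) ≠ ⟨k, hk.trans hm⟩ by simp; omega)
  replace h2 : inner ℝ (b ⟨m, hm⟩) (b ⟨k, hk.trans hm⟩) = 0 := h2
  rw [← hc', inner_smul_right] at h2
  have h3 := b.orthonormal.1 ⟨m, hm⟩
  rw [real_inner_self_eq_norm_sq, h3] at h2
  simp at h2
  apply hne ⟨k, hk.trans hm⟩
  rw [← hc', h2]
  simp

section Magnetic

variable {N β : ℕ}

/-- The antisymmetric magnetic potential. -/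
noncomputable def magA (uE vE : Fin β → Fin N) (α : Fin β → ℝ) (u v : Fin N) : ℝ :=
  ∑ j : Fin β, (if u = uE j ∧ v = vE j then α j else if u = vE j ∧ v = uE j then -α j else 0)

theorem magA_symm (uE vE : Fin β → Fin N) (horder : ∀ j, uE j < vE j)
    (α : Fin β → ℝ) (u v : Fin N) : magA uE vE α v u = -magA uE vE α u v := by
  unfold magA
  rw [← Finset.sum_neg_distrib]
  refine Finset.sum_congr rfl fun j _ => ?_
  have := (horder j).ne
  by_cases h1 : u = uE j ∧ v = vE j
  · obtain ⟨rfl, rfl⟩ := h1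
    simp [this]
  · by_cases h2 : u = vE j ∧ v = uE j
    · obtain ⟨rfl, rfl⟩ := h2
      simp [this]
    · rw [if_neg h1, if_neg h2, if_neg (fun h => h2 h.symm), if_neg (fun h => h1 h.symm), neg_zero]

theorem magA_smul (uE vE : Fin β → Fin N) (α : Fin β → ℝ) (t : ℝ) (u v : Fin N) :
    magA uE vE (t • α) u v = t * magA uE vE α u v := by
  unfold magA
  rw [Finset.mul_sum]
  refine Finset.sum_congr rfl fun j _ => ?_
  simp only [Pi.smul_apply, smul_eq_mul]
  split_ifs <;> ring

theorem magA_add (uE vE : Fin β → Fin N) (α α' : Fin β → ℝ) (u v : Fin N) :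
    magA uE vE (α + α') u v = magA uE vE α u v + magA uE vE α' u v := by
  unfold magA
  rw [← Finset.sum_add_distrib]
  refine Finset.sum_congr rfl fun j _ => ?_
  simp only [Pi.add_apply]
  split_ifs <;> ring

theorem magA_edge (uE vE : Fin β → Fin N)
    (hdistinct : ∀ i j, s(uE i, vE i) = s(uE j, vE j) → i = j)
    (α : Fin β → ℝ) (j : Fin β) : magA uE vE α (uE j) (vE j) = α j := by
  unfold magA
  rw [Finset.sum_eq_single j]
  · simp
  · intro i _ hij
    rw [if_neg, if_neg]
    · rintro ⟨h1, h2⟩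
      exact hij (hdistinct i j (by rw [h1, h2]; exact Sym2.eq_swap))
    · rintro ⟨h1, h2⟩
      exact hij (hdistinct i j (by rw [h1, h2]))
  · simp

theorem magA_off (uE vE : Fin β → Fin N)
    (α : Fin β → ℝ) (u v : Fin N) (h : ∀ j, s(u, v) ≠ s(uE j, vE j)) : magA uE vE α u v = 0 := by
  unfold magA
  refine Finset.sum_eq_zero fun j _ => ?_
  rw [if_neg, if_neg]
  · rintro ⟨h1, h2⟩
    exact h j (by rw [h1, h2]; exact Sym2.eq_swap)
  · rintro ⟨h1, h2⟩
    exact h j (by rw [h1, h2])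

theorem mag_apply (G : SimpleGraph (Fin N)) [DecidableRel G.Adj] (q : Fin N → ℝ)
    (uE vE : Fin β → Fin N) (horder : ∀ j, uE j < vE j)
    (hadj : ∀ j, G.Adj (uE j) (vE j))
    (hdistinct : ∀ i j, s(uE i, vE i) = s(uE j, vE j) → i = j)
    (α : Fin β → ℝ) (u v : Fin N) :
    schrodMag G q uE vE α u v = (if u = v then (q u : ℂ) else 0) -
      (if G.Adj u v then Complex.exp (Complex.I * (magA uE vE α u v : ℝ)) else 0) := by
  have hbase : ((schrodOp G q).map (fun x => (x : ℂ))) u v = (if u = v then (q u : ℂ) else 0) -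
      (if G.Adj u v then 1 else 0) := by
    simp only [schrodOp, Matrix.map_apply, Matrix.sub_apply, Matrix.diagonal_apply,
      SimpleGraph.adjMatrix_apply]
    rw [Complex.ofReal_sub]
    congr 1 <;> split_ifs <;> simp
  unfold schrodMag
  rw [Matrix.add_apply, hbase, Matrix.sum_apply]
  simp only [Matrix.of_apply]
  by_cases h : ∃ j, s(u, v) = s(uE j, vE j)
  · obtain ⟨j, hj⟩ := h
    have hA : G.Adj u v := by
      have := hadj j
      rw [← SimpleGraph.mem_edgeSet, ← hj] at this
      exact this
    have hs : ∀ i, i ≠ j → ¬ (u = uE i ∧ v = vE i) ∧ ¬ (u = vE i ∧ v = uE i) := by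
      intro i hij
      constructor
      · rintro ⟨h1, h2⟩
        exact hij (hdistinct i j (by rw [← hj, h1, h2]))
      · rintro ⟨h1, h2⟩
        exact hij (hdistinct i j (by rw [← hj, h1, h2]; exact Sym2.eq_swap))
    rw [Finset.sum_eq_single j (fun i _ hij => by rw [if_neg (hs i hij).1, if_neg (hs i hij).2])
      (by simp), if_pos hA, if_pos hA]
    have hne := (horder j).ne
    rcases Sym2.eq_iff.1 hj with ⟨rfl, rfl⟩ | ⟨rfl, rfl⟩
    · rw [magA_edge uE vE hdistinct]
      simp
    · rw [magA_symm uE vE horder, magA_edge uE vE hdistinct]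
      simp [hne]
  · push Not at h
    rw [magA_off uE vE α u v h, Finset.sum_eq_zero]
    · simp
    · intro j _
      rw [if_neg, if_neg]
      · rintro ⟨h1, h2⟩
        exact h j (by rw [h1, h2]; exact Sym2.eq_swap)
      · rintro ⟨h1, h2⟩
        exact h j (by rw [h1, h2])

theorem mag_hermitian (G : SimpleGraph (Fin N)) [DecidableRel G.Adj] (q : Fin N → ℝ)
    (uE vE : Fin β → Fin N) (horder : ∀ j, uE j < vE j)
    (hadj : ∀ j, G.Adj (uE j) (vE j))
    (hdistinct : ∀ i j, s(uE i, vE i) = s(uE j, vE j) → i = j)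
    (α : Fin β → ℝ) : (schrodMag G q uE vE α).IsHermitian := by
  ext u v
  rw [Matrix.conjTranspose_apply, mag_apply G q uE vE horder hadj hdistinct,
    mag_apply G q uE vE horder hadj hdistinct, magA_symm uE vE horder]
  simp only [G.adj_comm v u, eq_comm (a := v) (b := u)]
  rw [star_sub]
  congr 1
  · split_ifs with h
    · subst h; simp
    · simp
  · split_ifs with h
    · rw [Complex.star_def, ← Complex.exp_conj]
      simp
    · simp

theorem mag_zero (G : SimpleGraph (Fin N)) [DecidableRel G.Adj] (q : Fin N → ℝ)
    (uE vE : Fin β → Fin N) :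
    schrodMag G q uE vE 0 = (schrodOp G q).map (fun x => (x : ℂ)) := by
  unfold schrodMag
  rw [Finset.sum_eq_zero, add_zero]
  intro j _
  ext a b
  simp

theorem schrodOp_hermitian (G : SimpleGraph (Fin N)) [DecidableRel G.Adj] (q : Fin N → ℝ) :
    (schrodOp G q).IsHermitian := by
  ext u v
  simp only [schrodOp, Matrix.conjTranspose_apply, Matrix.sub_apply, Matrix.diagonal_apply,
      SimpleGraph.adjMatrix_apply, G.adj_comm v u, star_trivial]
  by_cases h : u = v
  · subst h; rfl
  · rw [if_neg h, if_neg (fun hvu => h hvu.symm)]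

/-- Edge weights of the transformed quadratic form. -/
noncomputable def wt (G : SimpleGraph (Fin N)) [DecidableRel G.Adj] (f : Fin N → ℝ)
    (u v : Fin N) : ℝ := if G.Adj u v then f u * f v else 0

theorem wt_symm (G : SimpleGraph (Fin N)) [DecidableRel G.Adj] (f : Fin N → ℝ)
    (u v : Fin N) : wt G f v u = wt G f u v := by
  unfold wt
  simp only [G.adj_comm v u, mul_comm (f v)]

theorem schrodOp_mulVec (G : SimpleGraph (Fin N)) [DecidableRel G.Adj] (q x : Fin N → ℝ)
    (u : Fin N) : (schrodOp G q).mulVec x u =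
      q u * x u - ∑ v, (if G.Adj u v then (1 : ℝ) else 0) * x v := by
  unfold schrodOp
  rw [Matrix.sub_mulVec, Pi.sub_apply, Matrix.mulVec_diagonal]
  simp only [Matrix.mulVec, dotProduct, SimpleGraph.adjMatrix_apply]

theorem sum_wt (G : SimpleGraph (Fin N)) [DecidableRel G.Adj] (q f : Fin N → ℝ) (l : ℝ)
    (heig : (schrodOp G q).mulVec f = l • f) (u : Fin N) :
    ∑ v, wt G f u v = (q u - l) * f u * f u := by
  have h := congrFun heig u
  rw [schrodOp_mulVec, Pi.smul_apply, smul_eq_mul] at h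
  have h2 : ∑ v, wt G f u v = f u * ∑ v, (if G.Adj u v then (1 : ℝ) else 0) * f v := by
    rw [Finset.mul_sum]
    refine Finset.sum_congr rfl fun v _ => ?_
    unfold wt
    split_ifs <;> ring
  rw [h2]
  linear_combination (-f u) * h

theorem key_identity (G : SimpleGraph (Fin N)) [DecidableRel G.Adj] (q : Fin N → ℝ)
    (uE vE : Fin β → Fin N) (horder : ∀ j, uE j < vE j)
    (hadj : ∀ j, G.Adj (uE j) (vE j))
    (hdistinct : ∀ i j, s(uE i, vE i) = s(uE j, vE j) → i = j)
    (f : Fin N → ℝ) (l : ℝ) (heig : (schrodOp G q).mulVec f = l • f)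
    (α : Fin β → ℝ) (g : Fin N → ℂ) :
    2 * (qform (schrodMag G q uE vE α) (fun u => (f u : ℂ) * g u)
        - l * ∑ u, ‖(f u : ℂ) * g u‖ ^ 2) =
      ∑ u, ∑ v, wt G f u v *
        ‖g u - Complex.exp (Complex.I * (magA uE vE α u v : ℝ)) * g v‖ ^ 2 := by
  have hE : ∀ u v, ‖g u - Complex.exp (Complex.I * (magA uE vE α u v : ℝ)) * g v‖ ^ 2
      = ‖g u‖ ^ 2 + ‖g v‖ ^ 2 -
        2 * (star (g u) * Complex.exp (Complex.I * (magA uE vE α u v : ℝ)) * g v).re := by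
    intro u v
    have h1 : ‖Complex.exp (Complex.I * (magA uE vE α u v : ℝ)) * g v‖ = ‖g v‖ := by
      rw [norm_mul, mul_comm Complex.I, Complex.norm_exp_ofReal_mul_I, one_mul]
    rw [@norm_sub_sq ℂ, h1]
    simp only [RCLike.inner_apply, RCLike.re_to_complex, Complex.star_def]
    rw [show (starRingEnd ℂ) (g u) * Complex.exp (Complex.I * (magA uE vE α u v : ℝ)) * g v
      = Complex.exp (Complex.I * (magA uE vE α u v : ℝ)) * g v * (starRingEnd ℂ) (g u) by ring]
    ring
  have hL : qform (schrodMag G q uE vE α) (fun u => (f u : ℂ) * g u) =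
      ∑ u, q u * f u * f u * ‖g u‖ ^ 2 - ∑ u, ∑ v, wt G f u v *
        (star (g u) * Complex.exp (Complex.I * (magA uE vE α u v : ℝ)) * g v).re := by
    unfold qform
    simp only [dotProduct, Matrix.mulVec, RCLike.re_to_complex, Complex.re_sum, Finset.mul_sum]
    rw [← Finset.sum_sub_distrib]
    refine Finset.sum_congr rfl fun u _ => ?_
    have h1 : q u * f u * f u * ‖g u‖ ^ 2 = ∑ v, if u = v then q u * f u * f u * ‖g u‖ ^ 2 else 0 := by
      simp
    rw [h1, ← Finset.sum_sub_distrib]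
    refine Finset.sum_congr rfl fun v _ => ?_
    rw [mag_apply G q uE vE horder hadj hdistinct, sub_mul, mul_sub, Complex.sub_re]
    congr 1
    · split_ifs with h
      · subst h
        have : star (fun u => (f u : ℂ) * g u) u * ((q u : ℂ) * ((f u : ℂ) * g u))
          = ((q u * f u * f u * ‖g u‖ ^ 2 : ℝ) : ℂ) := by
          push_cast
          rw [← Complex.mul_conj']
          simp
          ring
        rw [this, Complex.ofReal_re]
      · simp
    · unfold wt
      split_ifs with h
      · rw [← Complex.re_ofReal_mul]
        congr 1
        simp
        ring
      · simp
  have hN : ∑ u, ‖(f u : ℂ) * g u‖ ^ 2 = ∑ u, f u * f u * ‖g u‖ ^ 2 := by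
    refine Finset.sum_congr rfl fun u _ => ?_
    rw [norm_mul, mul_pow, Complex.norm_real, Real.norm_eq_abs, sq_abs]
    ring
  have h1 : ∑ u, ∑ v, wt G f u v * ‖g u‖ ^ 2 = ∑ u, (q u - l) * f u * f u * ‖g u‖ ^ 2 := by
    refine Finset.sum_congr rfl fun u _ => ?_
    rw [← Finset.sum_mul, sum_wt G q f l heig]
  have h2 : ∑ u, ∑ v, wt G f u v * ‖g v‖ ^ 2 = ∑ u, (q u - l) * f u * f u * ‖g u‖ ^ 2 := by
    rw [← h1, Finset.sum_comm]
    simp only [wt_symm]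
  have h3 : ∑ u, (q u - l) * f u * f u * ‖g u‖ ^ 2 =
      ∑ u, q u * f u * f u * ‖g u‖ ^ 2 - l * ∑ u, f u * f u * ‖g u‖ ^ 2 := by
    rw [Finset.mul_sum, ← Finset.sum_sub_distrib]
    exact Finset.sum_congr rfl fun u _ => by ring
  simp only [hE, mul_sub, mul_add, Finset.sum_sub_distrib, Finset.sum_add_distrib]
  rw [h1, h2, h3, hL, hN]
  have h4 : ∑ u, ∑ v, wt G f u v * (2 *
        (star (g u) * Complex.exp (Complex.I * (magA uE vE α u v : ℝ)) * g v).re)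
     = 2 * ∑ u, ∑ v, wt G f u v *
        (star (g u) * Complex.exp (Complex.I * (magA uE vE α u v : ℝ)) * g v).re := by
    rw [Finset.mul_sum]
    refine Finset.sum_congr rfl fun u _ => ?_
    rw [Finset.mul_sum]
    exact Finset.sum_congr rfl fun v _ => by ring
  rw [h4]
  ring

/-- Real polarized identity. -/
theorem real_identity (G : SimpleGraph (Fin N)) [DecidableRel G.Adj] (q : Fin N → ℝ)
    (f : Fin N → ℝ) (l : ℝ) (heig : (schrodOp G q).mulVec f = l • f) (hf0 : ∀ v, f v ≠ 0)
    (x y : Fin N → ℝ) (m : ℝ) (hx : (schrodOp G q).mulVec x = m • x) :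
    ∑ u, ∑ v, wt G f u v * ((x u / f u - x v / f v) * (y u / f u - y v / f v)) =
      2 * (m - l) * ∑ u, x u * y u := by
  have hA : ∀ u, ∑ v, wt G f u v * ((x u / f u - x v / f v) * (y u / f u)) = (m - l) * (x u * y u) := by
    intro u
    have hfu := hf0 u
    have h1 : ∑ v, wt G f u v * ((x u / f u - x v / f v) * (y u / f u)) =
      (∑ v, wt G f u v) * (x u / f u * (y u / f u)) -
        y u * ∑ v, (if G.Adj u v then (1 : ℝ) else 0) * x v := by
      rw [Finset.mul_sum, Finset.sum_mul, ← Finset.sum_sub_distrib]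
      refine Finset.sum_congr rfl fun v _ => ?_
      have hfv := hf0 v
      unfold wt
      split_ifs
      · field_simp
      · simp
    rw [h1, sum_wt G q f l heig]
    have h := congrFun hx u
    rw [schrodOp_mulVec, Pi.smul_apply, smul_eq_mul] at h
    field_simp
    linear_combination y u * h
  have hB : ∑ u, ∑ v, wt G f u v * ((x u / f u - x v / f v) * (y v / f v)) =
      - ∑ u, ∑ v, wt G f u v * ((x u / f u - x v / f v) * (y u / f u)) := by
    rw [Finset.sum_comm, ← Finset.sum_neg_distrib]
    refine Finset.sum_congr rfl fun u _ => ?_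
    rw [← Finset.sum_neg_distrib]
    refine Finset.sum_congr rfl fun v _ => ?_
    rw [wt_symm]
    ring
  have hC : ∑ u, ∑ v, wt G f u v * ((x u / f u - x v / f v) * (y u / f u - y v / f v)) =
      ∑ u, ∑ v, wt G f u v * ((x u / f u - x v / f v) * (y u / f u)) -
      ∑ u, ∑ v, wt G f u v * ((x u / f u - x v / f v) * (y v / f v)) := by
    rw [← Finset.sum_sub_distrib]
    refine Finset.sum_congr rfl fun u _ => ?_
    rw [← Finset.sum_sub_distrib]
    exact Finset.sum_congr rfl fun v _ => by ring
  rw [hC, hB]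
  simp only [hA]
  rw [← Finset.mul_sum]
  ring

end Magnetic

section Main

variable {N β : ℕ}

theorem exists_rep (V : Type*) : ∃ p : Sym2 V → V × V, ∀ e, s((p e).1, (p e).2) = e := by
  have : ∀ e : Sym2 V, ∃ p : V × V, s(p.1, p.2) = e := by
    intro e
    induction e using Sym2.ind with
    | _ x y => exact ⟨(x, y), rfl⟩
  choose p hp using this
  exact ⟨p, hp⟩

theorem mem_neg_iff (G : SimpleGraph (Fin N)) (f : Fin N → ℝ) (u v : Fin N) :
    s(u, v) ∈ {e : Sym2 (Fin N) | e ∈ G.edgeSet ∧ ∀ u v : Fin N, e = s(u, v) → f u * f v < 0} ↔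
      G.Adj u v ∧ f u * f v < 0 := by
  rw [Set.mem_ofPred_eq, SimpleGraph.mem_edgeSet]
  constructor
  · rintro ⟨h1, h2⟩
    exact ⟨h1, h2 u v rfl⟩
  · rintro ⟨h1, h2⟩
    refine ⟨h1, fun a b hab => ?_⟩
    rcases Sym2.eq_iff.1 hab with ⟨rfl, rfl⟩ | ⟨rfl, rfl⟩
    · exact h2
    · rwa [mul_comm]

theorem lower_bound (G : SimpleGraph (Fin N)) [DecidableRel G.Adj] (q : Fin N → ℝ)
    (uE vE : Fin β → Fin N) (horder : ∀ j, uE j < vE j)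
    (hadj : ∀ j, G.Adj (uE j) (vE j))
    (hdistinct : ∀ i j, s(uE i, vE i) = s(uE j, vE j) → i = j)
    (f : Fin N → ℝ) (l : ℝ) (heig : (schrodOp G q).mulVec f = l • f) (hf0 : ∀ v, f v ≠ 0)
    (α : Fin β → ℝ) (m : ℕ) (hm : m < N) (hφ : signChanges G f ≤ m) :
    l ≤ sE (schrodMag G q uE vE α) m := by
  classical
  obtain ⟨p, hp⟩ := exists_rep (Fin N)
  let S : Set (Sym2 (Fin N)) :=
    {e : Sym2 (Fin N) | e ∈ G.edgeSet ∧ ∀ u v : Fin N, e = s(u, v) → f u * f v < 0}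
  have hcard : Fintype.card S ≤ m := by
    rw [← Nat.card_eq_fintype_card, Nat.card_coe_set_eq]
    exact hφ
  let D : Fin N → Fin N → (Fin N → ℂ) →ₗ[ℂ] ℂ := fun u v =>
    ((f u : ℂ)⁻¹) • LinearMap.proj u -
      (Complex.exp (Complex.I * (magA uE vE α u v : ℝ)) * (f v : ℂ)⁻¹) • LinearMap.proj v
  let T : (Fin N → ℂ) →ₗ[ℂ] (S → ℂ) := LinearMap.pi fun e => D (p e.1).1 (p e.1).2
  refine le_sE_of_constraint (schrodMag G q uE vE α)
    (mag_hermitian G q uE vE horder hadj hdistinct α) m hm hcard T l ?_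
  intro x hx
  set g : Fin N → ℂ := fun u => (f u : ℂ)⁻¹ * x u with hg
  have hfg : (fun u => (f u : ℂ) * g u) = x := by
    funext u
    have : (f u : ℂ) ≠ 0 := by exact_mod_cast hf0 u
    simp [hg, this]
  have hkey := key_identity G q uE vE horder hadj hdistinct f l heig α g
  have hsum : ∑ u, ‖(f u : ℂ) * g u‖ ^ 2 = ∑ u, ‖x u‖ ^ 2 :=
    Finset.sum_congr rfl fun u _ => by rw [← hfg]
  rw [hfg, hsum] at hkey
  have hD : ∀ e : S, g (p e.1).1 - Complex.exp (Complex.I *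
      (magA uE vE α (p e.1).1 (p e.1).2 : ℝ)) * g (p e.1).2 = 0 := by
    intro e
    have h := congrFun hx e
    simp only [T, D, LinearMap.pi_apply, LinearMap.sub_apply, LinearMap.smul_apply,
      LinearMap.proj_apply, smul_eq_mul, Pi.zero_apply] at h
    rw [← h, hg]
    ring
  have hnn : 0 ≤ ∑ u, ∑ v, wt G f u v *
        ‖g u - Complex.exp (Complex.I * (magA uE vE α u v : ℝ)) * g v‖ ^ 2 := by
    refine Finset.sum_nonneg fun u _ => Finset.sum_nonneg fun v _ => ?_
    by_cases hA : G.Adj u v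
    · by_cases hneg : f u * f v < 0
      · have hmem : s(u, v) ∈ S := (mem_neg_iff G f u v).2 ⟨hA, hneg⟩
        have h := hD ⟨_, hmem⟩
        have hz : g u - Complex.exp (Complex.I * (magA uE vE α u v : ℝ)) * g v = 0 := by
          rcases Sym2.eq_iff.1 (hp s(u, v)) with ⟨h1, h2⟩ | ⟨h1, h2⟩
          · simpa only [h1, h2] using h
          · simp only [h1, h2] at h
            rw [magA_symm uE vE horder _ u v] at h
            have h3 : g v = Complex.exp (Complex.I * ((-magA uE vE α u v : ℝ) : ℂ)) * g u :=
              sub_eq_zero.1 h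
            rw [h3, ← mul_assoc, ← Complex.exp_add]
            simp
        simp [hz]
      · refine mul_nonneg ?_ (sq_nonneg _)
        rw [wt, if_pos hA]
        exact not_lt.1 hneg
    · simp [wt, hA]
  linarith

/-- The real 1-form `A_α + dθ`. -/
noncomputable def oneForm (uE vE : Fin β → Fin N) (u v : Fin N) :
    ((Fin N → ℝ) × (Fin β → ℝ)) →ₗ[ℝ] ℝ where
  toFun z := magA uE vE z.2 u v + z.1 v - z.1 u
  map_add' z w := by
    simp only [Prod.snd_add, Prod.fst_add, Pi.add_apply, magA_add]
    ring
  map_smul' c z := by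
    simp only [Prod.smul_snd, Prod.smul_fst, Pi.smul_apply, magA_smul, smul_eq_mul, RingHom.id_apply]
    ring

theorem oneForm_symm (uE vE : Fin β → Fin N) (horder : ∀ j, uE j < vE j) (u v : Fin N)
    (z : (Fin N → ℝ) × (Fin β → ℝ)) : oneForm uE vE v u z = - oneForm uE vE u v z := by
  simp only [oneForm, LinearMap.coe_mk, AddHom.coe_mk]
  rw [magA_symm uE vE horder _ u v]
  ring

theorem exists_omega (G : SimpleGraph (Fin N)) [DecidableRel G.Adj]
    (uE vE : Fin β → Fin N) (horder : ∀ j, uE j < vE j)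
    (hadj : ∀ j, G.Adj (uE j) (vE j))
    (hdistinct : ∀ i j, s(uE i, vE i) = s(uE j, vE j) → i = j)
    (htree : (G.deleteEdges {e | ∃ j, e = s(uE j, vE j)}).IsTree)
    (hβ : β + N = G.edgeFinset.card + 1)
    (f : Fin N → ℝ) (m : ℕ) (hm : m < N) (hφ : m < signChanges G f)
    (R : Fin m → Fin N → Fin N → ℝ) :
    ∃ z : (Fin N → ℝ) × (Fin β → ℝ),
      (∃ u v, G.Adj u v ∧ oneForm uE vE u v z ≠ 0) ∧
      (∀ u v, G.Adj u v → 0 ≤ f u * f v → oneForm uE vE u v z = 0) ∧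
      (∀ k, ∑ u, ∑ v, wt G f u v * (oneForm uE vE u v z * R k u v) = 0) := by
  classical
  obtain ⟨p, hp⟩ := exists_rep (Fin N)
  let S : Set (Sym2 (Fin N)) :=
    {e : Sym2 (Fin N) | e ∈ G.edgeSet ∧ ∀ u v : Fin N, e = s(u, v) → f u * f v < 0}
  have hSsub : S ⊆ G.edgeSet := fun e he => he.1
  let P : Set (Sym2 (Fin N)) := G.edgeSet \ S
  have hcard : Fintype.card P + signChanges G f = G.edgeFinset.card := by
    have h1 : P.ncard + S.ncard = G.edgeSet.ncard := Set.ncard_sdiff_add_ncard_of_subset hSsub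
    rw [← Nat.card_eq_fintype_card, Nat.card_coe_set_eq]
    have h2 : G.edgeSet.ncard = G.edgeFinset.card := by
      rw [← SimpleGraph.coe_edgeFinset, Set.ncard_coe_finset]
    rw [← h2, ← h1]
    rfl
  let v0 : Fin N := ⟨m, hm⟩
  let L1 : ((Fin N → ℝ) × (Fin β → ℝ)) →ₗ[ℝ] (P → ℝ) :=
    LinearMap.pi fun e => oneForm uE vE (p e.1).1 (p e.1).2
  let L2 : ((Fin N → ℝ) × (Fin β → ℝ)) →ₗ[ℝ] (Fin m → ℝ) :=
    LinearMap.pi fun k => ∑ u, ∑ v, (wt G f u v * R k u v) • oneForm uE vE u v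
  let L3 : ((Fin N → ℝ) × (Fin β → ℝ)) →ₗ[ℝ] ℝ := (LinearMap.proj v0) ∘ₗ LinearMap.fst ℝ _ _
  have hker : LinearMap.ker (L1.prod (L2.prod L3)) ≠ ⊥ :=
    LinearMap.ker_ne_bot_of_finrank_lt (by
      simp only [Module.finrank_prod, Module.finrank_fintype_fun_eq_card, Module.finrank_self,
        Fintype.card_fin]
      omega)
  obtain ⟨z, hz, hz0⟩ := (Submodule.ne_bot_iff _).1 hker
  rw [LinearMap.mem_ker, LinearMap.prod_apply] at hz
  replace hz := Prod.mk_eq_zero.1 hz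
  obtain ⟨hz1, hz23⟩ := hz
  rw [LinearMap.prod_apply] at hz23
  replace hz23 := Prod.mk_eq_zero.1 hz23
  obtain ⟨hz2, hz3⟩ := hz23
  refine ⟨z, ?_, ?_, ?_⟩
  · by_contra hcon
    push Not at hcon
    apply hz0
    have hoff : ∀ u v, (G.deleteEdges {e | ∃ j, e = s(uE j, vE j)}).Adj u v → z.1 u = z.1 v := by
      intro u v huv
      rw [SimpleGraph.deleteEdges_adj] at huv
      have h1 := hcon u v huv.1
      have h2 : magA uE vE z.2 u v = 0 := by
        refine magA_off uE vE z.2 u v fun j hj => huv.2 ⟨j, hj⟩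
      simp only [oneForm, LinearMap.coe_mk, AddHom.coe_mk, h2] at h1
      linarith
    have hwalk : ∀ u v, (G.deleteEdges {e | ∃ j, e = s(uE j, vE j)}).Walk u v → z.1 u = z.1 v := by
      intro u v w
      induction w with
      | nil => rfl
      | cons h _ ih => exact (hoff _ _ h).trans ih
    have hθ : z.1 = 0 := by
      funext u
      obtain ⟨w⟩ := htree.connected.preconnected u v0
      rw [hwalk _ _ w]
      exact hz3
    have hα : z.2 = 0 := by
      funext j
      have h1 := hcon _ _ (hadj j)
      simp only [oneForm, LinearMap.coe_mk, AddHom.coe_mk, magA_edge uE vE hdistinct, hθ] at h1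
      simpa using h1
    exact Prod.ext hθ hα
  · intro u v hA hpos
    have hmem : s(u, v) ∈ P := by
      refine ⟨hA, fun h => ?_⟩
      exact absurd ((mem_neg_iff G f u v).1 h).2 (not_lt.2 hpos)
    have h : oneForm uE vE (p s(u, v)).1 (p s(u, v)).2 z = 0 := congrFun hz1 ⟨_, hmem⟩
    rcases Sym2.eq_iff.1 (hp s(u, v)) with ⟨h1, h2⟩ | ⟨h1, h2⟩
    · rwa [h1, h2] at h
    · rw [h1, h2, oneForm_symm uE vE horder] at h
      linarith
  · intro k
    have h := congrFun hz2 k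
    simp only [L2, LinearMap.pi_apply, LinearMap.sum_apply, LinearMap.smul_apply, smul_eq_mul,
      Pi.zero_apply] at h
    rw [← h]
    exact Finset.sum_congr rfl fun u _ => Finset.sum_congr rfl fun v _ => by ring

theorem weighted_real {P ι : Type*} [Fintype P] [Fintype ι] [DecidableEq ι] (W : P → ℝ)
    (r : ι → P → ℝ) (d : ι → ℝ)
    (h : ∀ i j, ∑ x, W x * (r i x * r j x) = if i = j then d i else 0) (a : ι → ℝ) :
    ∑ x, W x * (∑ i, a i * r i x) ^ 2 = ∑ i, a i ^ 2 * d i := by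
  have h1 : ∀ x, W x * (∑ i, a i * r i x) ^ 2 =
      ∑ i, ∑ j, a i * a j * (W x * (r i x * r j x)) := by
    intro x
    rw [sq, Finset.sum_mul_sum, Finset.mul_sum]
    refine Finset.sum_congr rfl fun i _ => ?_
    rw [Finset.mul_sum]
    exact Finset.sum_congr rfl fun j _ => by ring
  simp only [h1]
  rw [Finset.sum_comm]
  refine Finset.sum_congr rfl fun i _ => ?_
  rw [Finset.sum_comm]
  simp only [← Finset.mul_sum, h]
  simp [sq]

theorem weighted_complex {P ι : Type*} [Fintype P] [Fintype ι] [DecidableEq ι] (W : P → ℝ)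
    (r : ι → P → ℝ) (d : ι → ℝ)
    (h : ∀ i j, ∑ x, W x * (r i x * r j x) = if i = j then d i else 0) (c : ι → ℂ) :
    ∑ x, W x * ‖∑ i, c i * (r i x : ℂ)‖ ^ 2 = ∑ i, ‖c i‖ ^ 2 * d i := by
  have h1 : ∀ x, W x * ‖∑ i, c i * (r i x : ℂ)‖ ^ 2 =
      W x * (∑ i, (c i).re * r i x) ^ 2 + W x * (∑ i, (c i).im * r i x) ^ 2 := by
    intro x
    rw [Complex.sq_norm, Complex.normSq_apply, Complex.re_sum, Complex.im_sum]
    simp only [Complex.re_mul_ofReal, Complex.im_mul_ofReal]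
    ring
  simp only [h1]
  rw [Finset.sum_add_distrib, weighted_real W r d h, weighted_real W r d h,
    ← Finset.sum_add_distrib]
  refine Finset.sum_congr rfl fun i _ => ?_
  rw [Complex.sq_norm, Complex.normSq_apply]
  ring

/-- Continuous extension of `(1 - exp (i t w)) / t`. -/
noncomputable def kap (t w : ℝ) : ℂ :=
  -Complex.I * w * Complex.exp (Complex.I * ((t * w / 2 : ℝ) : ℂ)) * (Real.sinc (t * w / 2) : ℝ)

theorem kap_zero (w : ℝ) : kap 0 w = -Complex.I * w := by
  simp [kap]

theorem kap_mul (t w : ℝ) : (t : ℂ) * kap t w = 1 - Complex.exp (Complex.I * ((t * w : ℝ) : ℂ)) := by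
  have h1 : ∀ x : ℝ, x * Real.sinc x = Real.sin x := by
    intro x
    by_cases hx : x = 0
    · simp [hx]
    · rw [Real.sinc_of_ne_zero hx]
      field_simp
  set y : ℝ := t * w / 2 with hy
  have h2 : t * w = y + y := by rw [hy]; ring
  have h3 : (t : ℂ) * w = 2 * (y : ℂ) := by
    rw [← Complex.ofReal_mul, h2]; push_cast; ring
  have h4 : ((y : ℂ)) * (Real.sinc y : ℝ) = Complex.sin y := by
    rw [← Complex.ofReal_mul, h1, Complex.ofReal_sin]
  have h5 : (t : ℂ) * kap t w = -Complex.I * 2 * Complex.exp (Complex.I * (y : ℂ)) * Complex.sin y := by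
    rw [← h4]
    unfold kap
    linear_combination (-Complex.I * Complex.exp (Complex.I * (y : ℂ)) * (Real.sinc y : ℝ)) * h3
  rw [h5, h2, Complex.ofReal_add, mul_add, Complex.exp_add, mul_comm Complex.I (y : ℂ),
    Complex.exp_mul_I]
  have h6 := Complex.sin_sq_add_cos_sq (y : ℂ)
  linear_combination h6 - (Complex.sin y ^ 2) * Complex.I_sq

theorem kap_continuous (w : ℝ) : Continuous fun t => kap t w := by
  have := Real.continuous_sinc
  unfold kap
  fun_prop

set_option maxHeartbeats 1000000 in
theorem upper_bound (G : SimpleGraph (Fin N)) [DecidableRel G.Adj] (q : Fin N → ℝ)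
    (uE vE : Fin β → Fin N) (horder : ∀ j, uE j < vE j)
    (hadj : ∀ j, G.Adj (uE j) (vE j))
    (hdistinct : ∀ i j, s(uE i, vE i) = s(uE j, vE j) → i = j)
    (htree : (G.deleteEdges {e | ∃ j, e = s(uE j, vE j)}).IsTree)
    (hβ : β + N = G.edgeFinset.card + 1)
    (f : Fin N → ℝ) (l : ℝ) (heig : (schrodOp G q).mulVec f = l • f) (hf0 : ∀ v, f v ≠ 0)
    (m : ℕ) (hm : m < N) (hφ : m < signChanges G f)
    (x : Fin m → Fin N → ℝ) (μ : Fin m → ℝ) (hμ : ∀ k, μ k < l)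
    (hx : ∀ k, (schrodOp G q).mulVec (x k) = μ k • x k)
    (horth : ∀ k k', ∑ u, x k u * x k' u = if k = k' then 1 else 0) :
    ∃ α : Fin β → ℝ, ∀ᶠ t in nhdsWithin (0 : ℝ) {0}ᶜ,
      sE (schrodMag G q uE vE (t • α)) m < l := by
  classical
  obtain ⟨z, hne, hpos, hR⟩ := exists_omega G uE vE horder hadj hdistinct htree hβ f m hm hφ
    (fun k u v => x k u / f u - x k v / f v)
  set ω : Fin N → Fin N → ℝ := fun u v => oneForm uE vE u v z with hω
  let r : Option (Fin m) → Fin N × Fin N → ℝ := fun i p =>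
    i.elim (ω p.1 p.2) (fun k => x k p.1 / f p.1 - x k p.2 / f p.2)
  let W : Fin N × Fin N → ℝ := fun p => wt G f p.1 p.2
  have hW0 : ∀ p : Fin N × Fin N, W p * (ω p.1 p.2 * ω p.1 p.2) ≤ 0 := by
    intro p
    by_cases hA : G.Adj p.1 p.2
    · rcases le_or_gt 0 (f p.1 * f p.2) with h | h
      · have : ω p.1 p.2 = 0 := hpos _ _ hA h
        simp [this]
      · have : W p < 0 := by simpa only [W, wt, if_pos hA] using h
        nlinarith [mul_self_nonneg (ω p.1 p.2)]
    · simp [W, wt, hA]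
  have hd0 : ∑ p, W p * (ω p.1 p.2 * ω p.1 p.2) < 0 := by
    obtain ⟨u, v, hA, huv⟩ := hne
    have hlt : ∑ p, W p * (ω p.1 p.2 * ω p.1 p.2) < ∑ p : Fin N × Fin N, (0 : ℝ) := by
      refine Finset.sum_lt_sum (fun p _ => hW0 p) ⟨(u, v), Finset.mem_univ _, ?_⟩
      have h1 : f u * f v < 0 := by
        by_contra hcon
        exact huv (hpos u v hA (not_lt.1 hcon))
      have h2 : W (u, v) < 0 := by simpa only [W, wt, if_pos hA] using h1
      exact mul_neg_of_neg_of_pos h2 (mul_self_pos.2 huv)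
    simpa using hlt
  let d : Option (Fin m) → ℝ := fun i =>
    i.elim (∑ p, W p * (ω p.1 p.2 * ω p.1 p.2)) (fun k => 2 * (μ k - l))
  have hdneg : ∀ i, d i < 0 := by
    intro i
    cases i with
    | none => exact hd0
    | some k =>
      have := hμ k
      change 2 * (μ k - l) < 0
      linarith
  have hort : ∀ i j, ∑ p, W p * (r i p * r j p) = if i = j then d i else 0 := by
    intro i j
    cases i with
    | none =>
      cases j with
      | none => simp [r, d]
      | some k =>
        rw [if_neg (by simp), Fintype.sum_prod_type]
        exact hR k
    | some k =>
      cases j with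
      | none =>
        rw [if_neg (by simp), Fintype.sum_prod_type, ← hR k]
        refine Finset.sum_congr rfl fun u _ => Finset.sum_congr rfl fun v _ => ?_
        simp only [W, r, Option.elim, hω]
        ring
      | some k' =>
        rw [Fintype.sum_prod_type]
        have h := real_identity G q f l heig hf0 (x k) (x k') (μ k) (hx k)
        simp only [W, r, Option.elim]
        rw [h, horth]
        by_cases hk : k = k'
        · simp [hk, d]
        · simp [hk]
  let E : ℝ → (Option (Fin m) → ℂ) → Fin N → Fin N → ℂ := fun t c u v =>
    c none * kap t (ω u v) + ∑ k, c (some k) * (((x k u / f u : ℝ) : ℂ) -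
      Complex.exp (Complex.I * ((t * ω u v : ℝ) : ℂ)) * ((x k v / f v : ℝ) : ℂ))
  let F : ℝ → (Option (Fin m) → ℂ) → ℝ := fun t c => ∑ u, ∑ v, wt G f u v * ‖E t c u v‖ ^ 2
  have hFcont : Continuous fun s : ℝ × (Option (Fin m) → ℂ) => F s.1 s.2 := by
    have h1 : ∀ w, Continuous fun s : ℝ × (Option (Fin m) → ℂ) => kap s.1 w :=
      fun w => (kap_continuous w).comp continuous_fst
    simp only [F, E]
    fun_prop
  have hF0 : ∀ c, c ≠ 0 → F 0 c < 0 := by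
    intro c hc
    let c' : Option (Fin m) → ℂ := fun i => i.elim (-Complex.I * c none) (fun k => c (some k))
    have hnorm : ∀ i, ‖c' i‖ = ‖c i‖ := by
      intro i
      cases i <;> simp [c']
    have h1 : F 0 c = ∑ i, ‖c' i‖ ^ 2 * d i := by
      rw [← weighted_complex W r d hort c', Fintype.sum_prod_type]
      refine Finset.sum_congr rfl fun u _ => Finset.sum_congr rfl fun v _ => ?_
      have : E 0 c u v = ∑ i, c' i * (r i (u, v) : ℂ) := by
        rw [Fintype.sum_option]
        simp only [E, kap_zero, c', r, Option.elim]
        congr 1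
        · ring
        · refine Finset.sum_congr rfl fun k _ => ?_
          simp
      rw [this]
    rw [h1]
    obtain ⟨i, hi⟩ := Function.ne_iff.1 hc
    have hlt : ∑ i, ‖c' i‖ ^ 2 * d i < ∑ i : Option (Fin m), (0 : ℝ) := by
      refine Finset.sum_lt_sum (fun j _ => ?_) ⟨i, Finset.mem_univ _, ?_⟩
      · exact mul_nonpos_of_nonneg_of_nonpos (sq_nonneg _) (hdneg j).le
      · refine mul_neg_of_pos_of_neg ?_ (hdneg i)
        rw [hnorm]
        have : 0 < ‖c i‖ := norm_pos_iff.2 hi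
        positivity
    simpa using hlt
  have hhom : ∀ t (s : ℝ) c, F t ((s : ℂ) • c) = s ^ 2 * F t c := by
    intro t s c
    have hE : ∀ u v, E t ((s : ℂ) • c) u v = (s : ℂ) * E t c u v := by
      intro u v
      simp only [E, Pi.smul_apply, smul_eq_mul, mul_add, Finset.mul_sum]
      congr 1
      · ring
      · exact Finset.sum_congr rfl fun k _ => by ring
    simp only [F, hE, Finset.mul_sum]
    refine Finset.sum_congr rfl fun u _ => Finset.sum_congr rfl fun v _ => ?_
    rw [norm_mul, mul_pow, Complex.norm_real, Real.norm_eq_abs, sq_abs]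
    ring
  have hev : ∀ᶠ t in nhds (0 : ℝ), ∀ c ∈ Metric.sphere (0 : Option (Fin m) → ℂ) 1, F t c < 0 := by
    refine (isCompact_sphere (0 : Option (Fin m) → ℂ) 1).eventually_forall_of_forall_eventually ?_
    intro c hc
    have hc0 : c ≠ 0 := by
      rintro rfl
      simp at hc
    exact (hFcont.tendsto ((0 : ℝ), c)).eventually_lt_const (hF0 c hc0)
  refine ⟨z.2, ?_⟩
  filter_upwards [nhdsWithin_le_nhds hev, self_mem_nhdsWithin] with t ht ht0
  have ht0' : (t : ℂ) ≠ 0 := by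
    have : t ≠ 0 := ht0
    exact_mod_cast this
  have hneg : ∀ c, c ≠ 0 → F t c < 0 := by
    intro c hc
    have hn : 0 < ‖c‖ := norm_pos_iff.2 hc
    have h1 := ht (((‖c‖⁻¹ : ℝ) : ℂ) • c) (by
      rw [mem_sphere_zero_iff_norm, norm_smul, Complex.norm_real, norm_inv, norm_norm]
      exact inv_mul_cancel₀ hn.ne')
    rw [hhom] at h1
    by_contra hcon
    have : 0 ≤ ‖c‖⁻¹ ^ 2 * F t c := mul_nonneg (sq_nonneg _) (not_lt.1 hcon)
    linarith
  let Y : Fin N → (Option (Fin m) → ℂ) →ₗ[ℂ] ℂ := fun u =>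
    (t : ℂ)⁻¹ • LinearMap.proj none + ∑ k, ((x k u / f u : ℝ) : ℂ) • LinearMap.proj (some k)
  let T : (Option (Fin m) → ℂ) →ₗ[ℂ] (Fin N → ℂ) := LinearMap.pi fun u =>
    ((f u : ℂ) * Complex.exp (Complex.I * ((t * z.1 u : ℝ) : ℂ))) • Y u
  refine sE_lt_of_test (schrodMag G q uE vE (t • z.2))
    (mag_hermitian G q uE vE horder hadj hdistinct _) m hm (by simp) T l ?_
  intro c hc
  let g : Fin N → ℂ := fun u => Complex.exp (Complex.I * ((t * z.1 u : ℝ) : ℂ)) * Y u c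
  have hTg : T c = fun u => (f u : ℂ) * g u := by
    funext u
    simp only [T, g, LinearMap.pi_apply, LinearMap.smul_apply, smul_eq_mul]
    ring
  have hkey := key_identity G q uE vE horder hadj hdistinct f l heig (t • z.2) g
  have hFk : ∑ u, ∑ v, wt G f u v *
      ‖g u - Complex.exp (Complex.I * (magA uE vE (t • z.2) u v : ℝ)) * g v‖ ^ 2 = F t c := by
    refine Finset.sum_congr rfl fun u _ => Finset.sum_congr rfl fun v _ => ?_
    have h1 : g u - Complex.exp (Complex.I * (magA uE vE (t • z.2) u v : ℝ)) * g v =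
        Complex.exp (Complex.I * ((t * z.1 u : ℝ) : ℂ)) * E t c u v := by
      have h2 : Complex.exp (Complex.I * (magA uE vE (t • z.2) u v : ℝ)) *
          Complex.exp (Complex.I * ((t * z.1 v : ℝ) : ℂ)) =
          Complex.exp (Complex.I * ((t * z.1 u : ℝ) : ℂ)) *
          Complex.exp (Complex.I * ((t * ω u v : ℝ) : ℂ)) := by
        rw [← Complex.exp_add, ← Complex.exp_add, magA_smul]
        congr 1
        simp only [hω, oneForm, LinearMap.coe_mk, AddHom.coe_mk]
        push_cast
        ring
      have h3 : E t c u v = Y u c - Complex.exp (Complex.I * ((t * ω u v : ℝ) : ℂ)) * Y v c := by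
        have hk := kap_mul t (ω u v)
        have hk' : kap t (ω u v) = (t : ℂ)⁻¹ *
            (1 - Complex.exp (Complex.I * ((t * ω u v : ℝ) : ℂ))) := by
          rw [← hk, inv_mul_cancel_left₀ ht0']
        simp only [E, Y, hk', LinearMap.add_apply, LinearMap.smul_apply, LinearMap.sum_apply,
          LinearMap.proj_apply, smul_eq_mul, mul_sub, Finset.sum_sub_distrib, mul_add,
          Finset.mul_sum]
        have e1 : ∀ a : Fin N, ∑ k, c (some k) * ((x k a / f a : ℝ) : ℂ) =
            ∑ k, ((x k a / f a : ℝ) : ℂ) * c (some k) := fun a =>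
          Finset.sum_congr rfl fun k _ => mul_comm _ _
        have e2 : ∑ k, c (some k) * (Complex.exp (Complex.I * ((t * ω u v : ℝ) : ℂ)) *
            ((x k v / f v : ℝ) : ℂ)) = ∑ k, Complex.exp (Complex.I * ((t * ω u v : ℝ) : ℂ)) *
            (((x k v / f v : ℝ) : ℂ) * c (some k)) :=
          Finset.sum_congr rfl fun k _ => by ring
        rw [e1, e2]
        ring
      rw [h3]
      simp only [g]
      rw [← mul_assoc, h2]
      ring
    rw [h1, norm_mul, mul_comm Complex.I, Complex.norm_exp_ofReal_mul_I, one_mul]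
  rw [hFk] at hkey
  have h := hneg c hc
  rw [hTg]
  linarith

end Main

/-- Stability corollary: `α ↦ λ_n(H(Γ^α_mag))` has a local minimum at `α = 0`
if and only if the eigenfunction has exactly `n - 1` sign changes. -/
theorem mag_local_min_iff_no_surplus {N β : ℕ} (G : SimpleGraph (Fin N))
    [DecidableRel G.Adj] (hconn : G.Connected) (q : Fin N → ℝ)
    (uE vE : Fin β → Fin N) (horder : ∀ j, uE j < vE j)
    (hadj : ∀ j, G.Adj (uE j) (vE j))
    (hdistinct : ∀ i j, s(uE i, vE i) = s(uE j, vE j) → i = j)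
    (htree : (G.deleteEdges {e | ∃ j, e = s(uE j, vE j)}).IsTree)
    (hβ : β + N = G.edgeFinset.card + 1)
    (n : ℕ) (hn1 : 1 ≤ n) (hn2 : n ≤ N)
    (f : Fin N → ℝ)
    (heig : (schrodOp G q).mulVec f = sE (schrodOp G q) (n - 1) • f)
    (hsimple : Module.finrank ℝ
      (Module.End.eigenspace (Matrix.toLin' (schrodOp G q)) (sE (schrodOp G q) (n - 1))) = 1)
    (hf0 : ∀ v, f v ≠ 0)
    (φ : ℕ) (hφ : φ = signChanges G f) :
    IsLocalMin (fun α : Fin β → ℝ => sE (schrodMag G q uE vE α) (n - 1)) 0 ↔ φ = n - 1 := by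
  classical
  have hm : n - 1 < N := by omega
  have hH := schrodOp_hermitian G q
  have hz : ∀ k, sE (schrodMag G q uE vE 0) k = sE (schrodOp G q) k := by
    intro k
    have h0 := mag_hermitian G q uE vE horder hadj hdistinct 0
    rw [mag_zero] at h0 ⊢
    exact sE_map _ hH h0 k
  obtain ⟨b, hb, hmono⟩ := exists_sorted_basis (schrodOp G q) hH
  have hlt : ∀ k, k < n - 1 → sE (schrodOp G q) k < sE (schrodOp G q) (n - 1) := fun k hk =>
    sE_lt_of_simple (schrodOp G q) (n - 1) k hm hk b hb hmono hsimple
  constructor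
  · intro hmin
    by_contra hne
    rcases lt_or_gt_of_ne hne with h | h
    · have h1 := lower_bound G q uE vE horder hadj hdistinct f _ heig hf0 0 φ (h.trans hm) hφ.ge
      rw [hz] at h1
      exact absurd (hlt φ h) (not_lt.2 h1)
    · obtain ⟨α, hα⟩ := upper_bound G q uE vE horder hadj hdistinct htree hβ f _ heig hf0 (n - 1) hm
        (hφ ▸ h) (fun k => (b ⟨k, k.2.trans hm⟩).ofLp) (fun k => sE (schrodOp G q) k)
        (fun k => hlt k k.2) (fun k => hb ⟨k, k.2.trans hm⟩) (by
          intro k k'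
          have h2 := orthonormal_iff_ite.1 b.orthonormal ⟨k, k.2.trans hm⟩ ⟨k', k'.2.trans hm⟩
          rw [PiLp.inner_apply] at h2
          simp only [Fin.mk.injEq, Fin.val_inj] at h2
          rw [← h2]
          refine Finset.sum_congr rfl fun u _ => ?_
          simp [mul_comm])
      have hcont : Filter.Tendsto (fun t : ℝ => t • α) (nhdsWithin (0 : ℝ) {0}ᶜ) (nhds 0) := by
        have : Continuous fun t : ℝ => t • α := by fun_prop
        have h3 := this.tendsto 0
        rw [zero_smul] at h3
        exact h3.mono_left nhdsWithin_le_nhds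
      obtain ⟨t, ht1, ht2⟩ := (hα.and (hcont.eventually hmin)).exists
      beta_reduce at ht2
      rw [hz] at ht2
      exact absurd ht1 (not_lt.2 ht2)
  · intro h
    refine Filter.Eventually.of_forall fun α => ?_
    beta_reduce
    rw [hz]
    exact lower_bound G q uE vE horder hadj hdistinct f _ heig hf0 α (n - 1) hm (by omega)
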